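/- Let L be a 3-dimensional complex ω-Lie algebra with ω not identically zero and with dim [L,L] = 2. Then L is isomorphic either to L₁ (basis {x,y,z} with [x,y] = y, [x,z] = 0, [y,z] = z, ω(x,y) = 1, ω(x,z) = ω(y,z) = 0) or to L₂ (basis {x,y,z} with [x,y] = 0, [x,z] = y, [y,z] = z, ω(x,z) = 1, ω(x,y) = ω(y,z) = 0). -/

import Mathlib

/-- The bracket of the ω-Lie algebra `L₁` on `ℂ³`, i.e. the bilinear extension of
`[x,y] = y`, `[x,z] = 0`, `[y,z] = z` on the standard basis `x = e₀, y = e₁, z = e₂`. -/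
def brL1 (u v : Fin 3 → ℂ) : Fin 3 → ℂ :=
  ![0, u 0 * v 1 - u 1 * v 0, u 1 * v 2 - u 2 * v 1]

/-- The form of `L₁`: bilinear extension of `ω(x,y) = 1`, `ω(x,z) = ω(y,z) = 0`. -/
def omL1 (u v : Fin 3 → ℂ) : ℂ := u 0 * v 1 - u 1 * v 0

/-- The bracket of the ω-Lie algebra `L₂` on `ℂ³`: bilinear extension of
`[x,y] = 0`, `[x,z] = y`, `[y,z] = z`. -/
def brL2 (u v : Fin 3 → ℂ) : Fin 3 → ℂ :=
  ![0, u 0 * v 2 - u 2 * v 0, u 1 * v 2 - u 2 * v 1]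

/-- The form of `L₂`: bilinear extension of `ω(x,z) = 1`, `ω(x,y) = ω(y,z) = 0`. -/
def omL2 (u v : Fin 3 → ℂ) : ℂ := u 0 * v 2 - u 2 * v 0

/-- `(L, bracket, ω)` is isomorphic, as an ω-Lie algebra, to the ω-Lie algebra on `ℂ³`
with bracket `br'` and form `ω'`: there is a linear bijection intertwining the brackets
and the bilinear forms. -/
def IsOmegaLieIsoTo {L : Type*} [AddCommGroup L] [Module ℂ L]
    (bracket : L →ₗ[ℂ] L →ₗ[ℂ] L) (ω : L →ₗ[ℂ] L →ₗ[ℂ] ℂ)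
    (br' : (Fin 3 → ℂ) → (Fin 3 → ℂ) → (Fin 3 → ℂ))
    (ω' : (Fin 3 → ℂ) → (Fin 3 → ℂ) → ℂ) : Prop :=
  ∃ f : L ≃ₗ[ℂ] (Fin 3 → ℂ),
    (∀ a b : L, f (bracket a b) = br' (f a) (f b)) ∧
    (∀ a b : L, ω' (f a) (f b) = ω a b)

theorem li3_iff {L : Type*} [AddCommGroup L] [Module ℂ L] (x y z : L) :
    LinearIndependent ℂ ![x, y, z] ↔
      ∀ a b c : ℂ, a • x + b • y + c • z = 0 → a = 0 ∧ b = 0 ∧ c = 0 := by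
  rw [Fintype.linearIndependent_iff]
  constructor
  · intro h a b c e
    have := h ![a, b, c] (by simpa [Fin.sum_univ_three] using e)
    exact ⟨this 0, this 1, this 2⟩
  · intro h g e i
    have := h (g 0) (g 1) (g 2) (by simpa [Fin.sum_univ_three] using e)
    fin_cases i
    · exact this.1
    · exact this.2.1
    · exact this.2.2

theorem basis3 {L : Type*} [AddCommGroup L] [Module ℂ L] [FiniteDimensional ℂ L]
    (hdim : Module.finrank ℂ L = 3) (x y z : L)
    (h : ∀ a b c : ℂ, a • x + b • y + c • z = 0 → a = 0 ∧ b = 0 ∧ c = 0) :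
    ∃ f : L ≃ₗ[ℂ] (Fin 3 → ℂ), (∀ v, v = f v 0 • x + f v 1 • y + f v 2 • z) ∧
      f x = ![1, 0, 0] ∧ f y = ![0, 1, 0] ∧ f z = ![0, 0, 1] := by
  have li := (li3_iff x y z).2 h
  let B := basisOfLinearIndependentOfCardEqFinrank li (by simp [hdim])
  have hB : ∀ i, B i = ![x, y, z] i := fun i => by simp [B]
  have e0 : B 0 = x := hB 0
  have e1 : B 1 = y := hB 1
  have e2 : B 2 = z := hB 2
  refine ⟨B.equivFun, fun v => ?_, ?_, ?_, ?_⟩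
  · have := B.sum_equivFun v
    rw [Fin.sum_univ_three, e0, e1, e2] at this
    exact this.symm
  · ext i; rw [← e0, B.equivFun_self]; fin_cases i <;> simp
  · ext i; rw [← e1, B.equivFun_self]; fin_cases i <;> simp
  · ext i; rw [← e2, B.equivFun_self]; fin_cases i <;> simp

theorem self_zero {L M : Type*} [AddCommGroup L] [Module ℂ L] [AddCommGroup M] [Module ℂ M]
    (B : L →ₗ[ℂ] L →ₗ[ℂ] M) (h : ∀ a b, B a b = - B b a) (a : L) : B a a = 0 := by
  have h1 := h a a
  have h2 : (2 : ℂ) • B a a = 0 := by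
    rw [two_smul]; nth_rewrite 1 [h1]; simp
  exact (smul_eq_zero.1 h2).resolve_left two_ne_zero

theorem expand {L M : Type*} [AddCommGroup L] [Module ℂ L] [AddCommGroup M] [Module ℂ M]
    (B : L →ₗ[ℂ] L →ₗ[ℂ] M) (h : ∀ a b, B a b = - B b a) (x y z : L) (a b c a' b' c' : ℂ) :
    B (a • x + b • y + c • z) (a' • x + b' • y + c' • z) =
      (a * b' - b * a') • B x y + (a * c' - c * a') • B x z + (b * c' - c * b') • B y z := by
  have h1 := h y x
  have h2 := h z x
  have h3 := h z y
  simp only [map_add, map_smul, LinearMap.add_apply, LinearMap.smul_apply, self_zero B h, h1, h2,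
    h3]
  module

theorem iso1 {L : Type*} [AddCommGroup L] [Module ℂ L] [FiniteDimensional ℂ L]
    (bracket : L →ₗ[ℂ] L →ₗ[ℂ] L) (ω : L →ₗ[ℂ] L →ₗ[ℂ] ℂ)
    (hanti : ∀ a b : L, bracket a b = - bracket b a)
    (hskew : ∀ a b : L, ω a b = - ω b a)
    (hdim : Module.finrank ℂ L = 3) (x y z : L)
    (h : ∀ a b c : ℂ, a • x + b • y + c • z = 0 → a = 0 ∧ b = 0 ∧ c = 0)
    (hxy : bracket x y = y) (hxz : bracket x z = 0) (hyz : bracket y z = z)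
    (oxy : ω x y = 1) (oxz : ω x z = 0) (oyz : ω y z = 0) :
    IsOmegaLieIsoTo bracket ω brL1 omL1 := by
  obtain ⟨f, hf, fx, fy, fz⟩ := basis3 hdim x y z h
  refine ⟨f, fun a b => ?_, fun a b => ?_⟩
  · conv_lhs => rw [hf a, hf b, expand bracket hanti, hxy, hxz, hyz]
    simp only [map_add, map_smul, fy, fz, map_zero]
    ext i; fin_cases i <;> simp [brL1]
  · conv_rhs => rw [hf a, hf b, expand ω hskew, oxy, oxz, oyz]
    simp [omL1]

theorem iso2 {L : Type*} [AddCommGroup L] [Module ℂ L] [FiniteDimensional ℂ L]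
    (bracket : L →ₗ[ℂ] L →ₗ[ℂ] L) (ω : L →ₗ[ℂ] L →ₗ[ℂ] ℂ)
    (hanti : ∀ a b : L, bracket a b = - bracket b a)
    (hskew : ∀ a b : L, ω a b = - ω b a)
    (hdim : Module.finrank ℂ L = 3) (x y z : L)
    (h : ∀ a b c : ℂ, a • x + b • y + c • z = 0 → a = 0 ∧ b = 0 ∧ c = 0)
    (hxy : bracket x y = 0) (hxz : bracket x z = y) (hyz : bracket y z = z)
    (oxy : ω x y = 0) (oxz : ω x z = 1) (oyz : ω y z = 0) :
    IsOmegaLieIsoTo bracket ω brL2 omL2 := by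
  obtain ⟨f, hf, fx, fy, fz⟩ := basis3 hdim x y z h
  refine ⟨f, fun a b => ?_, fun a b => ?_⟩
  · conv_lhs => rw [hf a, hf b, expand bracket hanti, hxy, hxz, hyz]
    simp only [map_add, map_smul, fy, fz, map_zero]
    ext i; fin_cases i <;> simp [brL2]
  · conv_rhs => rw [hf a, hf b, expand ω hskew, oxy, oxz, oyz]
    simp [omL2]

/-- The case where `[y,z] = z`. -/
theorem normal_case {L : Type*} [AddCommGroup L] [Module ℂ L] [FiniteDimensional ℂ L]
    (bracket : L →ₗ[ℂ] L →ₗ[ℂ] L) (ω : L →ₗ[ℂ] L →ₗ[ℂ] ℂ)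
    (hanti : ∀ a b : L, bracket a b = - bracket b a)
    (hskew : ∀ a b : L, ω a b = - ω b a)
    (hjac : ∀ a b c : L,
      bracket (bracket a b) c + bracket (bracket b c) a + bracket (bracket c a) b
        = ω a b • c + ω b c • a + ω c a • b)
    (hdim : Module.finrank ℂ L = 3)
    (hω : ¬ ∀ a b : L, ω a b = 0) (x y z : L) (a b c d : ℂ)
    (h : ∀ a b c : ℂ, a • x + b • y + c • z = 0 → a = 0 ∧ b = 0 ∧ c = 0)
    (hxy : bracket x y = a • y + b • z) (hxz : bracket x z = c • y + d • z)
    (hyz : bracket y z = z) :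
    IsOmegaLieIsoTo bracket ω brL1 omL1 ∨ IsOmegaLieIsoTo bracket ω brL2 omL2 := by
  have hzx := hanti z x
  have hzy := hanti z y
  have byx := hanti y x
  have bs := self_zero bracket hanti
  have os := self_zero ω hskew
  rw [hxy] at byx
  rw [hxz] at hzx
  rw [hyz] at hzy
  have ozx := hskew z x
  have oyx := hskew y x
  have ozy := hskew z y
  have J := hjac x y z
  simp only [hxy, hyz, hzx, map_add, map_neg, map_smul, LinearMap.add_apply, LinearMap.smul_apply,
    LinearMap.neg_apply, bs, hzy, ozx] at J
  obtain ⟨h1, h2, h3⟩ := h (- ω y z) (ω x z - c) (a - ω x y) (by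
    rw [← sub_eq_zero] at J; rw [← J]; module)
  have oyz : ω y z = 0 := by simpa using h1
  have oxz : ω x z = c := sub_eq_zero.1 h2
  have oxy : ω x y = a := (sub_eq_zero.1 h3).symm
  by_cases hc : c = 0
  · subst hc
    have ha : a ≠ 0 := by
      rintro rfl
      obtain ⟨f, hf, -⟩ := basis3 hdim x y z h
      apply hω
      intro u v
      rw [hf u, hf v, expand ω hskew, oxy, oxz, oyz]
      simp
    left
    refine iso1 bracket ω hanti hskew hdim (a⁻¹ • (x - d • y + b • z)) y z ?_ ?_ ?_ hyz ?_ ?_ oyz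
    · intro p q r e
      obtain ⟨e1, e2, e3⟩ := h (p * a⁻¹) (q - p * a⁻¹ * d) (r + p * a⁻¹ * b)
        (by rw [← e]; module)
      have : p = 0 := by simpa [ha] using e1
      subst this
      exact ⟨rfl, by simpa using e2, by simpa using e3⟩
    · simp only [map_add, map_sub, map_smul, LinearMap.add_apply, LinearMap.sub_apply,
        LinearMap.smul_apply, hxy, bs, hzy]
      match_scalars <;> field_simp
      ring
    · simp only [map_add, map_sub, map_smul, LinearMap.add_apply, LinearMap.sub_apply,
        LinearMap.smul_apply, hxz, bs, hyz]
      module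
    · simp [oxy, os, ozy, oyz, ha]
    · simp [oxz, os, oyz]
  · right
    -- `y' = y - (a/c) z`, `[x,y'] = (b - a d / c) z`, `[x,z] = c y' + (a + d) z`
    refine iso2 bracket ω hanti hskew hdim
      (c⁻¹ • (x - (a + d) • (y - (a / c) • z) + (b - a * d / c) • z)) (y - (a / c) • z) z
      ?_ ?_ ?_ ?_ ?_ ?_ ?_
    · intro p q r e
      obtain ⟨e1, e2, e3⟩ := h (p * c⁻¹) (q - p * c⁻¹ * (a + d))
        (r - q * (a / c) + p * c⁻¹ * ((a + d) * (a / c) + (b - a * d / c)))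
        (by rw [← e]; module)
      have : p = 0 := by simpa [hc] using e1
      subst this
      have : q = 0 := by simpa using e2
      subst this
      exact ⟨rfl, rfl, by simpa using e3⟩
    · simp only [map_add, map_sub, map_smul, LinearMap.add_apply, LinearMap.sub_apply,
        LinearMap.smul_apply, hxy, hxz, hyz, bs, hzy]
      match_scalars <;> field_simp <;> ring
    · simp only [map_add, map_sub, map_smul, LinearMap.add_apply, LinearMap.sub_apply,
        LinearMap.smul_apply, hxz, bs, hyz]
      match_scalars <;> field_simp <;> ring
    · simp [hyz, bs]
    · simp [oxy, oxz, os, oyz, ozy, hc]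
    · simp [oxz, os, oyz, hc]
    · simp [oyz, os]

/-- A 3-dimensional complex ω-Lie algebra with `ω` not identically zero and with
`dim [L,L] = 2` is isomorphic either to `L₁` or to `L₂`. -/
theorem omega_lie_rank_two_classification
    {L : Type*} [AddCommGroup L] [Module ℂ L] [FiniteDimensional ℂ L]
    (bracket : L →ₗ[ℂ] L →ₗ[ℂ] L) (ω : L →ₗ[ℂ] L →ₗ[ℂ] ℂ)
    (hanti : ∀ a b : L, bracket a b = - bracket b a)
    (hskew : ∀ a b : L, ω a b = - ω b a)
    (hjac : ∀ a b c : L,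
      bracket (bracket a b) c + bracket (bracket b c) a + bracket (bracket c a) b
        = ω a b • c + ω b c • a + ω c a • b)
    (hdim : Module.finrank ℂ L = 3)
    (hω : ¬ ∀ a b : L, ω a b = 0)
    (hderived : Module.finrank ℂ
      ↥(Submodule.span ℂ (Set.range fun p : L × L => bracket p.1 p.2)) = 2) :
    IsOmegaLieIsoTo bracket ω brL1 omL1 ∨ IsOmegaLieIsoTo bracket ω brL2 omL2 := by
  set D := Submodule.span ℂ (Set.range fun p : L × L => bracket p.1 p.2) with hD
  have hmem : ∀ u v, bracket u v ∈ D := fun u v => Submodule.subset_span ⟨(u, v), rfl⟩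
  have hne : ∃ x, x ∉ D := by
    by_contra! hcon
    have : D = ⊤ := Submodule.eq_top_iff'.2 hcon
    rw [this, finrank_top, hdim] at hderived
    omega
  obtain ⟨x, hx⟩ := hne
  let B := Module.finBasisOfFinrankEq ℂ D hderived
  obtain ⟨y, hy⟩ : ∃ y : L, y = B 0 := ⟨_, rfl⟩
  obtain ⟨z, hz⟩ : ∃ z : L, z = B 1 := ⟨_, rfl⟩
  have hyD : y ∈ D := hy ▸ (B 0).2
  have hzD : z ∈ D := hz ▸ (B 1).2
  have hsp : ∀ v ∈ D, ∃ p q : ℂ, v = p • y + q • z := by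
    intro v hv
    refine ⟨B.equivFun ⟨v, hv⟩ 0, B.equivFun ⟨v, hv⟩ 1, ?_⟩
    have := congrArg Subtype.val (B.sum_equivFun ⟨v, hv⟩)
    rw [Fin.sum_univ_two] at this
    rw [hy, hz]
    exact this.symm
  have h : ∀ a b c : ℂ, a • x + b • y + c • z = 0 → a = 0 ∧ b = 0 ∧ c = 0 := by
    intro a b c e
    have ha : a = 0 := by
      by_contra ha
      apply hx
      have h1 : a • x ∈ D := by
        have : a • x = -(b • y + c • z) := by
          rw [eq_neg_iff_add_eq_zero, ← e]; abel
        rw [this]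
        exact D.neg_mem (D.add_mem (D.smul_mem _ hyD) (D.smul_mem _ hzD))
      exact (D.smul_mem_iff ha).1 h1
    subst ha
    have li := Fintype.linearIndependent_iff.1 B.linearIndependent ![b, c] (by
      apply Subtype.ext
      simpa [Fin.sum_univ_two, ← hy, ← hz] using e)
    exact ⟨rfl, li 0, li 1⟩
  obtain ⟨a, b, hxy⟩ := hsp _ (hmem x y)
  obtain ⟨c, d, hxz⟩ := hsp _ (hmem x z)
  obtain ⟨p, q, hyz⟩ := hsp _ (hmem y z)
  have bs := self_zero bracket hanti
  have key : ∀ y' z' : L, y' ∈ D → z' ∈ D → bracket y' z' = z' →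
      (∀ v ∈ D, ∃ p q : ℂ, v = p • y' + q • z') →
      (∀ a b c : ℂ, a • x + b • y' + c • z' = 0 → a = 0 ∧ b = 0 ∧ c = 0) →
      IsOmegaLieIsoTo bracket ω brL1 omL1 ∨ IsOmegaLieIsoTo bracket ω brL2 omL2 := by
    intro y' z' _ _ e s' h'
    obtain ⟨a, b, hxy⟩ := s' _ (hmem x y')
    obtain ⟨c, d, hxz⟩ := s' _ (hmem x z')
    exact normal_case bracket ω hanti hskew hjac hdim hω x y' z' a b c d h' hxy hxz e
  have hzy := hanti z y
  by_cases hq : q = 0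
  · by_cases hp : p = 0
    · exfalso
      subst hq hp
      simp only [zero_smul, add_zero] at hyz
      rw [hyz, neg_zero] at hzy
      have J := hjac x y z
      simp only [hanti z x, hskew z x, hxy, hxz, hyz, map_add, map_neg, map_smul,
        LinearMap.add_apply, LinearMap.smul_apply, LinearMap.neg_apply, bs, hzy, map_zero,
        LinearMap.zero_apply, smul_zero, add_zero, neg_zero] at J
      obtain ⟨h1, h2, h3⟩ := h (ω y z) (- ω x z) (ω x y) (by rw [J]; module)
      obtain ⟨f, hf, -⟩ := basis3 hdim x y z h
      apply hω
      intro u v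
      rw [hf u, hf v, expand ω hskew, h1, h3, neg_eq_zero.1 h2]
      simp
    · subst hq
      simp only [zero_smul, add_zero] at hyz
      refine key (-p⁻¹ • z) (p • y) (D.smul_mem _ hzD) (D.smul_mem _ hyD) ?_ ?_ ?_
      · simp only [map_smul, LinearMap.smul_apply, hzy, hyz]
        match_scalars; field_simp
      · intro v hv
        obtain ⟨r, s, rfl⟩ := hsp v hv
        refine ⟨-p * s, p⁻¹ * r, ?_⟩
        match_scalars <;> field_simp
      · intro r s t e
        obtain ⟨h1, h2, h3⟩ := h r (t * p) (s * -p⁻¹) (by rw [← e]; module)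
        refine ⟨h1, ?_, ?_⟩
        · simpa [hp] using h3
        · simpa [hp] using h2
  · refine key (q⁻¹ • y) (p • y + q • z) (D.smul_mem _ hyD)
      (D.add_mem (D.smul_mem _ hyD) (D.smul_mem _ hzD)) ?_ ?_ ?_
    · simp only [map_add, map_smul, LinearMap.smul_apply, bs, hyz]
      match_scalars <;> field_simp <;> ring
    · intro v hv
      obtain ⟨r, s, rfl⟩ := hsp v hv
      refine ⟨q * r - p * s, q⁻¹ * s, ?_⟩
      match_scalars <;> field_simp <;> ring
    · intro r s t e
      obtain ⟨h1, h2, h3⟩ := h r (s * q⁻¹ + t * p) (t * q) (by rw [← e]; module)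
      have : t = 0 := by simpa [hq] using h3
      subst this
      refine ⟨h1, ?_, rfl⟩
      simpa [hq] using h2
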